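/- arXiv:2411.14689 — 14 statements merged into one kernel-verified Lean document; each statement's English description precedes it below -/
import Mathlib

section
/- There exists an ultrafilter p on ℝ that is both idempotent and in 0⁺, i.e., for every S ⊆ ℝ, S ∈ p iff {y : ℝ | {x : ℝ | x + y ∈ S} ∈ p} ∈ p, and for every real ε > 0 the open interval (0, ε) belongs to p. -/
attribute [local instance] Ultrafilter.add Ultrafilter.addSemigroup

theorem stmt_2 :
    ∃ p : Ultrafilter ℝ,
      (∀ S : Set ℝ, S ∈ p ↔ {y : ℝ | {x : ℝ | x + y ∈ S} ∈ p} ∈ p) ∧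
      (∀ ε : ℝ, 0 < ε → Set.Ioo (0 : ℝ) ε ∈ p) := by
  have key : ∃ p ∈ {p : Ultrafilter ℝ | ∀ ε : ℝ, 0 < ε → Set.Ioo (0 : ℝ) ε ∈ p}, p + p = p := by
    refine exists_idempotent_in_compact_add_subsemigroup
      (fun r => Ultrafilter.continuous_add_left r) _ ?_ ?_ ?_
    · refine ⟨Ultrafilter.of (nhdsWithin (0 : ℝ) (Set.Ioi 0)), fun ε hε => ?_⟩
      exact Ultrafilter.of_le _ (Ioo_mem_nhdsGT hε)
    · apply IsClosed.isCompact
      simp only [Set.setOf_forall]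
      exact isClosed_iInter fun ε => isClosed_iInter fun _ => ultrafilter_isClosed_basic _
    · intro p hp q hq ε hε
      have h := Ultrafilter.eventually_add p q (fun x => x ∈ Set.Ioo 0 ε)
      refine h.2 ?_
      have h1 : ∀ᶠ x in (p : Filter ℝ), x ∈ Set.Ioo 0 (ε / 2) := hp _ (half_pos hε)
      have h2 : ∀ᶠ x in (q : Filter ℝ), x ∈ Set.Ioo 0 (ε / 2) := hq _ (half_pos hε)
      filter_upwards [h1] with x hx
      filter_upwards [h2] with y hy
      exact ⟨by linarith [hx.1, hy.1], by linarith [hx.2, hy.2]⟩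
  obtain ⟨p, hp, hpp⟩ := key
  refine ⟨p, fun S => ?_, hp⟩
  have h := Ultrafilter.eventually_add p p (fun x => x ∈ S)
  rw [hpp] at h
  refine h.trans (iff_of_eq ?_)
  simp only [add_comm]
  rfl
end

section
/- Let p be an idempotent ultrafilter on ℝ with p ∈ 0⁺. Let f, g : ℝ → ℝ satisfy {x : ℝ | f is differentiable at x} ∈ p and {x : ℝ | g is differentiable at x} ∈ p. If {x : ℝ | f x = g x} ∈ p, then {x : ℝ | deriv f x = deriv g x} ∈ p. -/
theorem stmt_4 (p : Ultrafilter ℝ)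
    (hidem : ∀ S : Set ℝ, S ∈ p ↔ {y : ℝ | {x : ℝ | x + y ∈ S} ∈ p} ∈ p)
    (hpos : ∀ ε : ℝ, 0 < ε → Set.Ioo (0 : ℝ) ε ∈ p)
    (f g : ℝ → ℝ)
    (hf : {x : ℝ | DifferentiableAt ℝ f x} ∈ p)
    (hg : {x : ℝ | DifferentiableAt ℝ g x} ∈ p)
    (hfg : {x : ℝ | f x = g x} ∈ p) :
    {x : ℝ | deriv f x = deriv g x} ∈ p := by
  have hle : (p : Filter ℝ) ≤ nhdsWithin 0 {0}ᶜ := by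
    refine le_trans ?_ (nhdsGT_le_nhdsNE (0 : ℝ))
    rw [(nhdsGT_basis (0 : ℝ)).ge_iff]
    intro ε hε
    exact hpos ε hε
  have h2 := (hidem _).1 hfg
  filter_upwards [hf, hg, hfg, h2] with y hfy hgy hy hxy
  have tf := (hasDerivAt_iff_tendsto_slope_zero.1 hfy.hasDerivAt).mono_left hle
  have tg := (hasDerivAt_iff_tendsto_slope_zero.1 hgy.hasDerivAt).mono_left hle
  refine tendsto_nhds_unique_of_eventuallyEq tf tg ?_
  filter_upwards [hxy] with x hx
  have hx' : f (x + y) = g (x + y) := hx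
  have hy' : f y = g y := hy
  rw [add_comm y x, hx', hy']
end

section
/- Let p be an idempotent ultrafilter on ℝ with p ∈ 0⁺. There exists f : ℝ → ℝ such that {x : ℝ | f has derivative 0 at x} ∈ p, yet for every r ∈ ℝ, {x : ℝ | f x = r} ∉ p. (So [f]′ = 0 does not imply f is constant ultrafilter often.) -/
theorem stmt_5 (p : Ultrafilter ℝ)
    (hidem : ∀ S : Set ℝ, S ∈ p ↔ {y : ℝ | {x : ℝ | x + y ∈ S} ∈ p} ∈ p)
    (hpos : ∀ ε : ℝ, 0 < ε → Set.Ioo (0 : ℝ) ε ∈ p) :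
    ∃ f : ℝ → ℝ, {x : ℝ | HasDerivAt f 0 x} ∈ p ∧
      ∀ r : ℝ, {x : ℝ | f x = r} ∉ p := by
  have hA : {x : ℝ | ∃ n : ℤ, x⁻¹ = n} ∉ p := by
    intro h
    rw [hidem] at h
    obtain ⟨y, hy, hy0⟩ := p.nonempty_of_mem (Filter.inter_mem h (hpos 1 one_pos))
    have hy0 : 0 < y := hy0.1
    have hlt : ((⌈y⁻¹⌉ - 1 : ℤ) : ℝ) < y⁻¹ := by
      have := Int.ceil_lt_add_one y⁻¹
      push_cast
      linarith
    have hev : ∀ᶠ z in nhds y, ((⌈y⁻¹⌉ - 1 : ℤ) : ℝ) < z⁻¹ :=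
      (continuousAt_inv₀ hy0.ne').eventually (lt_mem_nhds hlt)
    obtain ⟨ε, hε, hball⟩ := Metric.eventually_nhds_iff.1 hev
    obtain ⟨x, ⟨n, hn⟩, hx0, hxε⟩ := p.nonempty_of_mem (Filter.inter_mem hy (hpos ε hε))
    have h1 := @hball (x + y) (by rw [Real.dist_eq, add_sub_cancel_right, abs_of_pos hx0]; exact hxε)
    have h2 : (x + y)⁻¹ < y⁻¹ := inv_strictAnti₀ hy0 (by linarith)
    rw [hn] at h1 h2
    have h3 : ⌈y⁻¹⌉ - 1 < n := by exact_mod_cast h1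
    have h4 : n < ⌈y⁻¹⌉ := Int.lt_ceil.2 h2
    omega
  refine ⟨fun x => (⌊x⁻¹⌋ : ℝ), ?_, ?_⟩
  · filter_upwards [Ultrafilter.compl_mem_iff_notMem.2 hA, hpos 1 one_pos] with x hx hx0
    have hx0 : 0 < x := hx0.1
    have h1 : (⌊x⁻¹⌋ : ℝ) < x⁻¹ :=
      lt_of_le_of_ne (Int.floor_le _) (fun h => hx ⟨_, h.symm⟩)
    have hc := continuousAt_inv₀ hx0.ne'
    refine (hasDerivAt_const x (⌊x⁻¹⌋ : ℝ)).congr_of_eventuallyEq ?_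
    filter_upwards [hc.eventually (lt_mem_nhds h1),
      hc.eventually (gt_mem_nhds (Int.lt_floor_add_one x⁻¹))] with z hz1 hz2
    have : ⌊z⁻¹⌋ = ⌊x⁻¹⌋ := Int.floor_eq_iff.2 ⟨hz1.le, hz2⟩
    simp [this]
  · intro r h
    have hr : 0 < |r| + 1 := by positivity
    obtain ⟨x, hx, hx0, hx1⟩ := p.nonempty_of_mem
      (Filter.inter_mem h (hpos (|r| + 1)⁻¹ (by positivity)))
    have h1 : |r| + 1 < x⁻¹ := (lt_inv_comm₀ hr hx0).2 hx1
    have h2 := Int.lt_floor_add_one x⁻¹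
    have h3 : (⌊x⁻¹⌋ : ℝ) = r := hx
    have := le_abs_self r
    linarith
end

section
/- Let p be an idempotent ultrafilter on ℝ with p ∈ 0⁺. Let f, g, F, G : ℝ → ℝ be entire. If {x : ℝ | f x = F x} ∈ p and {x : ℝ | g x = G x} ∈ p, then {x : ℝ | f (g x) = F (G x)} ∈ p. (Hence composition of entire hyperreal numbers, [f] ∘ [g] = [f ∘ g], is well-defined.) -/
def IsEntire (f : ℝ → ℝ) : Prop :=
  ∃ a : ℕ → ℝ, ∀ x : ℝ, HasSum (fun k : ℕ => a k * x ^ k) (f x)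

theorem IsEntire.analyticOnNhd {f : ℝ → ℝ} (hf : IsEntire f) :
    AnalyticOnNhd ℝ f Set.univ := by
  obtain ⟨a, ha⟩ := hf
  have h : HasFPowerSeriesOnBall f (FormalMultilinearSeries.ofScalars ℝ a) 0 ⊤ := by
    refine ⟨?_, by simp, ?_⟩
    · rw [FormalMultilinearSeries.radius_eq_top_of_summable_norm]
      intro r
      have := (ha r).summable.norm
      simpa [FormalMultilinearSeries.ofScalars_norm] using this
    · intro y _
      have := ha y
      simpa [FormalMultilinearSeries.ofScalars_apply_eq, mul_comm] using this
  have h2 := h.analyticOnNhd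
  simpa using h2

theorem IsEntire.eq_of_mem {p : Ultrafilter ℝ}
    (hpos : ∀ ε : ℝ, 0 < ε → Set.Ioo (0 : ℝ) ε ∈ p) {f F : ℝ → ℝ}
    (hf : IsEntire f) (hF : IsEntire F) (h : {x : ℝ | f x = F x} ∈ p) : f = F := by
  refine hf.analyticOnNhd.eq_of_frequently_eq (z₀ := 0) hF.analyticOnNhd ?_
  have hle : (p : Filter ℝ) ≤ nhdsWithin 0 {0}ᶜ := by
    intro s hs
    obtain ⟨ε, hε, hs⟩ := Metric.mem_nhdsWithin_iff.1 hs
    refine Filter.mem_of_superset (hpos ε hε) fun x hx => hs ⟨?_, ?_⟩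
    · simpa [abs_of_pos hx.1] using hx.2
    · simpa using hx.1.ne'
  exact Filter.Frequently.filter_mono (Filter.Eventually.frequently (f := (p : Filter ℝ)) h) hle

theorem stmt_7 (p : Ultrafilter ℝ)
    (hidem : ∀ S : Set ℝ, S ∈ p ↔ {y : ℝ | {x : ℝ | x + y ∈ S} ∈ p} ∈ p)
    (hpos : ∀ ε : ℝ, 0 < ε → Set.Ioo (0 : ℝ) ε ∈ p)
    (f g F G : ℝ → ℝ)
    (hf : IsEntire f) (hg : IsEntire g) (hF : IsEntire F) (hG : IsEntire G)
    (hfF : {x : ℝ | f x = F x} ∈ p) (hgG : {x : ℝ | g x = G x} ∈ p) :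
    {x : ℝ | f (g x) = F (G x)} ∈ p := by
  rw [hf.eq_of_mem hpos hF hfF, hg.eq_of_mem hpos hG hgG]
  exact Filter.mem_of_superset (Filter.univ_mem : Set.univ ∈ (p : Filter ℝ)) fun _ _ => rfl
end

section
/- Let q be a free idempotent ultrafilter on ℕ and let γ > 0 be an irrational real number. Then for every real ε > 0, the set {n : ℕ | |rm_γ(n)| < ε} belongs to q. -/
noncomputable def rm (γ : ℝ) (n : ℕ) : ℝ := (n : ℝ) - γ * (round ((n : ℝ) / γ) : ℝ)

theorem stmt_9 (q : Ultrafilter ℕ)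
    (hfree : ∀ S : Set ℕ, S.Finite → S ∉ q)
    (hidem : ∀ S : Set ℕ, S ∈ q ↔ {n : ℕ | {m : ℕ | m + n ∈ S} ∈ q} ∈ q)
    (γ : ℝ) (hγpos : 0 < γ) (hγirr : Irrational γ) :
    ∀ ε : ℝ, 0 < ε → {n : ℕ | |rm γ n| < ε} ∈ q := by
  intro ε hε
  have : Fact (0 < γ) := ⟨hγpos⟩
  let f : ℕ → AddCircle γ := fun n => ((n : ℝ) : AddCircle γ)
  obtain ⟨L, -, hL⟩ := (isCompact_univ (X := AddCircle γ)).ultrafilter_le_nhds (q.map f) (by simp)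
  have hA : {n : ℕ | dist (f n) L < ε / 4} ∈ q :=
    hL (Metric.ball_mem_nhds L (by positivity : (0 : ℝ) < ε / 4))
  obtain ⟨n, hn, hn'⟩ := q.nonempty_of_mem (Filter.inter_mem hA ((hidem _).1 hA))
  obtain ⟨m, hm, hm'⟩ := q.nonempty_of_mem (Filter.inter_mem hA hn')
  refine Filter.mem_of_superset hA fun N hN => ?_
  simp only [Set.mem_ofPred_eq, dist_eq_norm] at hn hm hm' hN ⊢
  have h1 : |rm γ N| = ‖f N‖ := by
    simp only [f, rm, AddCircle.norm_eq]
    rw [div_eq_inv_mul, mul_comm γ]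
  have h2 : f N = (f N - L) - (f m - L) - (f n - L) + (f (m + n) - L) := by
    have : f (m + n) = f m + f n := by simp [f]
    rw [this]; abel
  rw [h1, h2]
  have a := norm_add_le ((f N - L) - (f m - L) - (f n - L)) (f (m + n) - L)
  have b := norm_sub_le ((f N - L) - (f m - L)) (f n - L)
  have c := norm_sub_le (f N - L) (f m - L)
  linarith
end

section
/- Let q be a free idempotent ultrafilter on ℕ, let γ > 0 be irrational, and let f : ℝ → ℝ be γ-periodic (f(x + γ) = f(x) for all x). Let x ∈ ℝ and suppose f has derivative L at x. Then for every real ε > 0, the set {n : ℕ | |(f(x + n) − f(x))/rm_γ(n) − L| < ε} belongs to q. (I.e., the standard part of Δf(x)/[rm_γ] equals f′(x), where Δf(x) is the germ n ↦ f(x + n) − f(x) over q.) -/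
theorem rm_tendsto_aux (q : Ultrafilter ℕ)
    (hidem : ∀ S : Set ℕ, S ∈ q ↔ {n : ℕ | {m : ℕ | m + n ∈ S} ∈ q} ∈ q)
    (γ : ℝ) (hγpos : 0 < γ) :
    Filter.Tendsto (rm γ) (q : Filter ℕ) (nhds 0) := by
  haveI : Fact (0 < γ) := ⟨hγpos⟩
  let φ : ℕ → AddCircle γ := fun n => ((n : ℝ) : AddCircle γ)
  have hadd : ∀ m n, φ (m + n) = φ m + φ n := by
    intro m n
    simp only [φ, Nat.cast_add, AddCircle.coe_add]
  obtain ⟨a, -, ha⟩ := isCompact_univ.ultrafilter_le_nhds (q.map φ) (by simp)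
  have ht : Filter.Tendsto φ (q : Filter ℕ) (nhds a) := ha
  have ha0 : a = 0 := by
    rw [← norm_le_zero_iff]
    refine le_of_forall_pos_le_add fun δ hδ => ?_
    have hU : {n | dist (φ n) a < δ / 3} ∈ q :=
      ht (Metric.ball_mem_nhds a (by positivity))
    have hV := (hidem _).1 hU
    obtain ⟨n, hn, hn'⟩ := q.nonempty_of_mem (Filter.inter_mem hU hV)
    obtain ⟨m, hm, hm'⟩ := q.nonempty_of_mem (Filter.inter_mem hU hn')
    simp only [Set.mem_setOf_eq, dist_eq_norm] at hn hm hm'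
    have e : a = (φ (m + n) - a) - (φ m - a) - (φ n - a) := by
      rw [hadd]; abel
    have h1 := norm_sub_le ((φ (m + n) - a) - (φ m - a)) (φ n - a)
    have h2 := norm_sub_le (φ (m + n) - a) (φ m - a)
    rw [← e] at h1
    linarith
  rw [ha0] at ht
  rw [tendsto_zero_iff_norm_tendsto_zero] at ht ⊢
  refine ht.congr fun n => ?_
  simp only [φ, rm, AddCircle.norm_eq, Real.norm_eq_abs]
  rw [mul_comm γ, div_eq_inv_mul]

theorem stmt_10 (q : Ultrafilter ℕ)
    (hfree : ∀ S : Set ℕ, S.Finite → S ∉ q)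
    (hidem : ∀ S : Set ℕ, S ∈ q ↔ {n : ℕ | {m : ℕ | m + n ∈ S} ∈ q} ∈ q)
    (γ : ℝ) (hγpos : 0 < γ) (hγirr : Irrational γ)
    (f : ℝ → ℝ) (hper : ∀ x : ℝ, f (x + γ) = f x)
    (x : ℝ) (L : ℝ) (hderiv : HasDerivAt f L x) :
    ∀ ε : ℝ, 0 < ε →
      {n : ℕ | |(f (x + n) - f x) / rm γ n - L| < ε} ∈ q := by
  intro ε hε
  have ht := rm_tendsto_aux q hidem γ hγpos
  have h0 : {n : ℕ | n ≠ 0} ∈ q :=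
    Ultrafilter.compl_mem_iff_notMem.2 (hfree {0} (Set.finite_singleton 0))
  have hne : ∀ᶠ n in (q : Filter ℕ), rm γ n ∈ ({0}ᶜ : Set ℝ) := by
    filter_upwards [h0] with n hn h
    simp only [Set.mem_singleton_iff, rm, sub_eq_zero] at h
    have hr : round ((n : ℝ) / γ) ≠ 0 := by
      intro hr
      rw [hr] at h
      simp at h
      exact hn h
    exact (hγirr.mul_intCast hr).ne_nat n h.symm
  have hs := (hasDerivAt_iff_tendsto_slope_zero.1 hderiv).comp
    (tendsto_nhdsWithin_iff.2 ⟨ht, hne⟩)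
  have hb := hs (Metric.ball_mem_nhds L hε)
  filter_upwards [hb] with n hn
  have hp : Function.Periodic f γ := hper
  have e : f (x + rm γ n) = f (x + n) := by
    have := hp.sub_int_mul_eq (x := x + n) (round ((n : ℝ) / γ))
    rw [← this, rm]
    congr 1
    ring
  simp only [Set.mem_preimage, Function.comp, Metric.mem_ball, Real.dist_eq, smul_eq_mul, e] at hn
  rwa [div_eq_inv_mul]
end

section
/- Let q be a free idempotent ultrafilter on ℕ, let γ > 0 be irrational, and let f : ℝ → ℝ be γ-periodic (f(x + γ) = f(x) for all x). Let x ∈ ℝ and suppose the difference quotient h ↦ (f(x + h) − f(x))/h tends to +∞ as h → 0 with h ≠ 0. Then for every real M, the set {n : ℕ | (f(x + n) − f(x))/rm_γ(n) > M} belongs to q. (I.e., the hyperreal Δf(x)/[rm_γ] is positive infinite.) -/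
theorem rm_tendsto_zero (q : Ultrafilter ℕ)
    (hidem : ∀ S : Set ℕ, S ∈ q ↔ {n : ℕ | {m : ℕ | m + n ∈ S} ∈ q} ∈ q)
    (γ : ℝ) (hγpos : 0 < γ) :
    Filter.Tendsto (rm γ) q (nhds 0) := by
  haveI : Fact (0 < γ) := ⟨hγpos⟩
  let g : ℕ → AddCircle γ := fun n => ((n : ℝ) : AddCircle γ)
  have hadd : ∀ m n, g (m + n) = g m + g n := by
    intro m n
    simp [g]
  obtain ⟨L, -, hL⟩ := isCompact_univ.ultrafilter_le_nhds (q.map g) (by simp)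
  have hL' : Filter.Tendsto g q (nhds L) := hL
  have hLL : L + L = L := by
    by_contra hne
    obtain ⟨U, hU, hUc, hUn⟩ : ∃ U ∈ nhds L, IsClosed U ∧ L + L ∉ U := by
      have h1 : ({L + L}ᶜ : Set (AddCircle γ)) ∈ nhds L :=
        isOpen_compl_singleton.mem_nhds (fun h => hne (Set.mem_singleton_iff.mp h).symm)
      obtain ⟨U, hU, hc, hs⟩ := exists_mem_nhds_isClosed_subset h1
      exact ⟨U, hU, hc, fun h => hs h rfl⟩
    have h2 := (hidem (g ⁻¹' U)).1 (hL' hU)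
    apply hUn
    refine hUc.mem_of_tendsto (tendsto_const_nhds.add hL') (b := (q : Filter ℕ)) ?_
    refine Filter.mem_of_superset h2 ?_
    intro n hn
    refine hUc.mem_of_tendsto (hL'.add_const (g n)) ?_
    refine Filter.mem_of_superset hn ?_
    intro m hm
    have hm' : g (m + n) ∈ U := hm
    rw [hadd] at hm'
    exact hm'
  have hL0 : L = 0 := by simpa using hLL
  rw [hL0] at hL'
  have hn := hL'.norm
  rw [norm_zero] at hn
  rw [tendsto_zero_iff_norm_tendsto_zero]
  refine hn.congr ?_
  intro n
  simp only [g, rm]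
  rw [AddCircle.norm_eq, Real.norm_eq_abs]
  congr 2
  rw [mul_comm, div_eq_inv_mul]

theorem stmt_11 (q : Ultrafilter ℕ)
    (hfree : ∀ S : Set ℕ, S.Finite → S ∉ q)
    (hidem : ∀ S : Set ℕ, S ∈ q ↔ {n : ℕ | {m : ℕ | m + n ∈ S} ∈ q} ∈ q)
    (γ : ℝ) (hγpos : 0 < γ) (hγirr : Irrational γ)
    (f : ℝ → ℝ) (hper : ∀ x : ℝ, f (x + γ) = f x)
    (x : ℝ)
    (hdiv : Filter.Tendsto (fun h : ℝ => (f (x + h) - f x) / h)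
      (nhdsWithin 0 {0}ᶜ) Filter.atTop) :
    ∀ M : ℝ, {n : ℕ | (f (x + n) - f x) / rm γ n > M} ∈ q := by
  intro M
  have hne : ∀ᶠ n in (q : Filter ℕ), rm γ n ∈ ({0}ᶜ : Set ℝ) := by
    have h0 : ({0}ᶜ : Set ℕ) ∈ q :=
      Ultrafilter.compl_mem_iff_notMem.mpr (hfree {0} (Set.finite_singleton 0))
    refine Filter.mem_of_superset h0 ?_
    intro n hn h
    have hn0 : n ≠ 0 := hn
    have h' : (n : ℝ) - γ * (round ((n : ℝ) / γ) : ℝ) = 0 := h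
    have hr : round ((n : ℝ) / γ) ≠ 0 := by
      intro hr
      rw [hr] at h'
      simp at h'
      exact hn0 h'
    exact (hγirr.mul_intCast hr).ne_nat n (by linarith)
  have ht := hdiv.comp (tendsto_nhdsWithin_iff.mpr ⟨rm_tendsto_zero q hidem γ hγpos, hne⟩)
  refine Filter.mem_of_superset (ht.eventually_gt_atTop M) ?_
  intro n hn
  have hn' : M < (f (x + rm γ n) - f x) / rm γ n := hn
  have he : f (x + rm γ n) = f (x + n) := by
    have hp : Function.Periodic f γ := hper
    rw [← hp.sub_int_mul_eq (x := x + n) (round ((n : ℝ) / γ))]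
    congr 1
    simp only [rm]
    ring
  rw [he] at hn'
  exact hn'
end

section
/- Let q be a free idempotent ultrafilter on ℕ, let γ > 0 be irrational, and let f, g : ℝ → ℝ both be γ-periodic (f(x + γ) = f(x) and g(x + γ) = g(x) for all x). Let x ∈ ℝ, suppose the difference quotients h ↦ (f(x + h) − f(x))/h and h ↦ (g(x + h) − g(x))/h both tend to +∞ as h → 0 with h ≠ 0, and suppose there exists δ > 0 such that (f(x + h) − f(x))/h > (g(x + h) − g(x))/h whenever 0 < |h| < δ. Then the set {n : ℕ | (f(x + n) − f(x))/rm_γ(n) > (g(x + n) − g(x))/rm_γ(n)} belongs to q. (I.e., Δf(x)/[rm_γ] > Δg(x)/[rm_γ] as hyperreals.) -/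
theorem rm_small (q : Ultrafilter ℕ)
    (hidem : ∀ S : Set ℕ, S ∈ q ↔ {n : ℕ | {m : ℕ | m + n ∈ S} ∈ q} ∈ q)
    (γ : ℝ) (hγpos : 0 < γ) (δ : ℝ) (hδ : 0 < δ) :
    {n : ℕ | |rm γ n| < δ} ∈ q := by
  haveI : Fact (0 < γ) := ⟨hγpos⟩
  obtain ⟨a, -, ha⟩ := (isCompact_univ (X := AddCircle γ)).ultrafilter_le_nhds
    (q.map (fun n : ℕ => (((n : ℝ)) : AddCircle γ))) (by simp)
  have hS : ∀ ε : ℝ, 0 < ε → {n : ℕ | ‖(((n : ℝ)) : AddCircle γ) - a‖ < ε} ∈ q := by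
    intro ε hε
    have h1 := ha (Metric.ball_mem_nhds a hε)
    have h2 : (fun n : ℕ => (((n : ℝ)) : AddCircle γ)) ⁻¹' Metric.ball a ε ∈ q := h1
    refine Filter.mem_of_superset h2 ?_
    intro n hn
    simpa [dist_eq_norm] using hn
  have ha0 : a = 0 := by
    by_contra hne
    have hpos : 0 < ‖a‖ := norm_pos_iff.mpr hne
    have hSq := hS (‖a‖ / 3) (by positivity)
    obtain ⟨n, hn1, hn2⟩ := q.nonempty_of_mem (Filter.inter_mem hSq ((hidem _).1 hSq))
    obtain ⟨m, hm1, hm2⟩ := q.nonempty_of_mem (Filter.inter_mem hSq hn2)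
    simp only [Set.mem_setOf_eq] at hn1 hm1 hm2
    have e : a = ((((m + n : ℕ) : ℝ) : AddCircle γ) - a) - (((m : ℝ) : AddCircle γ) - a)
        - (((n : ℝ) : AddCircle γ) - a) := by
      rw [Nat.cast_add, AddCircle.coe_add]
      abel
    have h3 := norm_sub_le ((((m + n : ℕ) : ℝ) : AddCircle γ) - a
      - (((m : ℝ) : AddCircle γ) - a)) (((n : ℝ) : AddCircle γ) - a)
    have h4 := norm_sub_le (((m + n : ℕ) : ℝ) - a : AddCircle γ) (((m : ℝ) : AddCircle γ) - a)
    rw [← e] at h3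
    linarith
  refine Filter.mem_of_superset (hS δ hδ) ?_
  intro n hn
  simp only [Set.mem_setOf_eq, ha0, sub_zero, AddCircle.norm_eq] at hn
  simp only [Set.mem_setOf_eq, rm]
  rwa [div_eq_inv_mul, mul_comm γ]

theorem stmt_12 (q : Ultrafilter ℕ)
    (hfree : ∀ S : Set ℕ, S.Finite → S ∉ q)
    (hidem : ∀ S : Set ℕ, S ∈ q ↔ {n : ℕ | {m : ℕ | m + n ∈ S} ∈ q} ∈ q)
    (γ : ℝ) (hγpos : 0 < γ) (hγirr : Irrational γ)
    (f g : ℝ → ℝ)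
    (hperf : ∀ x : ℝ, f (x + γ) = f x)
    (hperg : ∀ x : ℝ, g (x + γ) = g x)
    (x : ℝ)
    (hdivf : Filter.Tendsto (fun h : ℝ => (f (x + h) - f x) / h)
      (nhdsWithin 0 {0}ᶜ) Filter.atTop)
    (hdivg : Filter.Tendsto (fun h : ℝ => (g (x + h) - g x) / h)
      (nhdsWithin 0 {0}ᶜ) Filter.atTop)
    (hfaster : ∃ δ : ℝ, 0 < δ ∧ ∀ h : ℝ, 0 < |h| → |h| < δ →
      (f (x + h) - f x) / h > (g (x + h) - g x) / h) :
    {n : ℕ | (f (x + n) - f x) / rm γ n > (g (x + n) - g x) / rm γ n} ∈ q := by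
  obtain ⟨δ, hδ, H⟩ := hfaster
  have h0 : ({0}ᶜ : Set ℕ) ∈ q :=
    Ultrafilter.compl_mem_iff_notMem.2 (hfree _ (Set.finite_singleton 0))
  refine Filter.mem_of_superset (Filter.inter_mem h0 (rm_small q hidem γ hγpos δ hδ)) ?_
  rintro n ⟨hn0, hn⟩
  have hn0 : n ≠ 0 := hn0
  have hn : |rm γ n| < δ := hn
  have hne : rm γ n ≠ 0 := by
    intro h
    have h1 : (n : ℝ) = γ * (round ((n : ℝ) / γ) : ℝ) := sub_eq_zero.1 h
    have hk : (round ((n : ℝ) / γ) : ℤ) ≠ 0 := by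
      intro hk
      rw [hk] at h1
      simp at h1
      exact hn0 h1
    have := (hγirr.mul_intCast hk).ne_nat n
    exact this h1.symm
  have e : x + (n : ℝ) = (x + rm γ n) + (round ((n : ℝ) / γ) : ℤ) * γ := by
    simp only [rm]
    ring
  have pf : f (x + n) = f (x + rm γ n) := by
    rw [e]
    exact (Function.Periodic.int_mul (f := f) hperf _) _
  have pg : g (x + n) = g (x + rm γ n) := by
    rw [e]
    exact (Function.Periodic.int_mul (f := g) hperg _) _
  show (f (x + n) - f x) / rm γ n > (g (x + n) - g x) / rm γ n
  rw [pf, pg]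
  exact H _ (abs_pos.2 hne) hn
end

section
/- Let q be a free idempotent ultrafilter on ℕ and let f, g : ℕ → ℝ. If {n : ℕ | f n = g n} ∈ q, then {n : ℕ | {m : ℕ | f(n + m) − f(n) = g(n + m) − g(n)} ∈ q} ∈ q. (I.e., if [f]_q = [g]_q then the finite derivatives Δf and Δg, where Δf(n) is the germ m ↦ f(n + m) − f(n) over q, agree q-almost everywhere; hence Δ[f] = ⟦Δf⟧ is well-defined on the hyperreals built from q.) -/
theorem stmt_13 (q : Ultrafilter ℕ)
    (hfree : ∀ S : Set ℕ, S.Finite → S ∉ q)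
    (hidem : ∀ S : Set ℕ, S ∈ q ↔ {n : ℕ | {m : ℕ | m + n ∈ S} ∈ q} ∈ q)
    (f g : ℕ → ℝ) (hfg : {n : ℕ | f n = g n} ∈ q) :
    {n : ℕ | {m : ℕ | f (n + m) - f n = g (n + m) - g n} ∈ q} ∈ q := by
  have h := (hidem _).1 hfg
  refine Filter.mem_of_superset (Filter.inter_mem hfg h) ?_
  rintro n ⟨h1, h2⟩
  refine Filter.mem_of_superset h2 ?_
  intro m hm
  simp only [Set.mem_setOf_eq] at h1 hm ⊢
  rw [add_comm n m, hm, h1]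
end

section
/- Let q be a free idempotent ultrafilter on ℕ. There exists f : ℕ → ℝ such that {n : ℕ | {m : ℕ | f(n + m) = f(n)} ∈ q} ∈ q, but for every r ∈ ℝ, {n : ℕ | f n = r} ∉ q. (I.e., there is f with finite derivative Δ[f] = 0 that is not q-almost-everywhere constant.) -/
theorem aux_dvd_mem (q : Ultrafilter ℕ)
    (hidem : ∀ S : Set ℕ, S ∈ q ↔ {n : ℕ | {m : ℕ | m + n ∈ S} ∈ q} ∈ q)
    (N : ℕ) (hN : N ≠ 0) : {n : ℕ | N ∣ n} ∈ q := by
  haveI : NeZero N := ⟨hN⟩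
  obtain ⟨a, ha⟩ := Ultrafilter.eq_pure_of_finite (q.map (fun n : ℕ => (n : ZMod N)))
  have hS : {n : ℕ | (n : ZMod N) = a} ∈ q := by
    have h : ({a} : Set (ZMod N)) ∈ q.map (fun n : ℕ => (n : ZMod N)) := by
      rw [ha]; exact Ultrafilter.mem_pure.2 rfl
    exact Ultrafilter.mem_map.1 h
  obtain ⟨n, hn1, hn2⟩ := q.nonempty_of_mem (Filter.inter_mem hS ((hidem _).1 hS))
  obtain ⟨m, hm1, hm2⟩ := q.nonempty_of_mem (Filter.inter_mem hS hn2)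
  simp only [Set.mem_setOf_eq, Nat.cast_add] at hn1 hm1 hm2
  rw [hn1, hm1] at hm2
  have h0 : a = 0 := by simpa using hm2
  subst h0
  filter_upwards [hS] with x hx
  exact (ZMod.natCast_eq_zero_iff x N).1 hx

theorem stmt_14 (q : Ultrafilter ℕ)
    (hfree : ∀ S : Set ℕ, S.Finite → S ∉ q)
    (hidem : ∀ S : Set ℕ, S ∈ q ↔ {n : ℕ | {m : ℕ | m + n ∈ S} ∈ q} ∈ q) :
    ∃ f : ℕ → ℝ,
      {n : ℕ | {m : ℕ | f (n + m) = f n} ∈ q} ∈ q ∧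
      ∀ r : ℝ, {n : ℕ | f n = r} ∉ q := by
  have hne : {n : ℕ | n ≠ 0} ∈ q := by
    have h := Ultrafilter.compl_mem_iff_notMem.2 (hfree {0} (Set.finite_singleton 0))
    filter_upwards [h] with x hx using hx
  have hd : ∀ k : ℕ, {n : ℕ | 2 ^ k ∣ n} ∈ q := fun k =>
    aux_dvd_mem q hidem (2 ^ k) (by positivity)
  refine ⟨fun n => (padicValNat 2 n : ℝ), ?_, ?_⟩
  · filter_upwards [hne] with n hn
    filter_upwards [hd (padicValNat 2 n + 1)] with m hm
    have hn : n ≠ 0 := hn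
    have hm : 2 ^ (padicValNat 2 n + 1) ∣ m := hm
    have hnm : n + m ≠ 0 := by omega
    have h1 : padicValNat 2 n ≤ padicValNat 2 (n + m) := by
      rw [← padicValNat_dvd_iff_le hnm]
      exact dvd_add pow_padicValNat_dvd ((pow_dvd_pow 2 (Nat.le_succ _)).trans hm)
    have h2 : ¬ padicValNat 2 n + 1 ≤ padicValNat 2 (n + m) := by
      rw [← padicValNat_dvd_iff_le hnm, Nat.dvd_add_left hm, padicValNat_dvd_iff_le hn]
      omega
    have h3 : padicValNat 2 (n + m) = padicValNat 2 n := by omega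
    simp [h3]
  · intro r hr
    obtain ⟨n, hn⟩ := q.nonempty_of_mem hr
    obtain ⟨m, ⟨hm1, hm2⟩, hm3⟩ := q.nonempty_of_mem
      (Filter.inter_mem (Filter.inter_mem hr hne) (hd (padicValNat 2 n + 1)))
    simp only [Set.mem_setOf_eq] at hn hm1 hm2 hm3
    rw [padicValNat_dvd_iff_le hm2] at hm3
    have : padicValNat 2 m = padicValNat 2 n := by exact_mod_cast hm1.trans hn.symm
    omega
end

section
/- (Hindman's Theorem) If f : ℕ → ℝ has finite range, then there exist c ∈ ℝ and an infinite set S ⊆ ℕ such that for every finite nonempty X ⊆ S, f(∑_{x ∈ X} x) = c. -/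
theorem stmt_16 (f : ℕ → ℝ) (hf : (Set.range f).Finite) :
    ∃ (c : ℝ) (S : Set ℕ), S.Infinite ∧
      ∀ X : Finset ℕ, X.Nonempty → ↑X ⊆ S → f (∑ x ∈ X, x) = c := by
  have hpos : ∀ (a : Stream' ℕ) (m : ℕ), m ∈ Hindman.FS a → (∀ i, 0 < a.get i) → 0 < m := by
    intro a m h
    induction h with
    | head' a => intro h; exact h 0
    | tail' a m _ ih => intro h; exact ih fun i => h (i + 1)
    | cons' a m _ ih => intro h; exact Nat.add_pos_left (h 0) _
  obtain ⟨t, ht, b, hb⟩ := Hindman.FS_partition_regular (Stream'.const 1)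
    ((fun c => {n : ℕ | 0 < n ∧ f n = c}) '' Set.range f) (hf.image _) (by
      intro m hm
      have h0 : 0 < m := hpos _ m hm (fun i => Nat.one_pos)
      exact ⟨_, ⟨f m, ⟨m, rfl⟩, rfl⟩, h0, rfl⟩)
  obtain ⟨c, -, rfl⟩ := ht
  have hsum : ∀ s : Finset ℕ, s.Nonempty → f (∑ i ∈ s, b.get i) = c :=
    fun s hs => (hb (Hindman.FS.finsetSum b s hs)).2
  have hbpos : ∀ i, 0 < b.get i := fun i => (hb (Hindman.FS.singleton b i)).1
  refine ⟨c, ?_⟩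
  by_cases hinf : (Set.range b.get).Infinite
  · refine ⟨_, hinf, fun X hX hXS => ?_⟩
    choose! g hg using hXS
    have hinj : Set.InjOn g (X : Set ℕ) := by
      intro x hx y hy hxy
      rw [← hg hx, ← hg hy, hxy]
    have := hsum (X.image g) (hX.image g)
    rw [Finset.sum_image hinj, Finset.sum_congr rfl (fun x hx => hg hx)] at this
    exact this
  · rw [Set.not_infinite] at hinf
    obtain ⟨v, hv⟩ : ∃ v, (b.get ⁻¹' {v}).Infinite := by
      by_contra! h
      have : (Set.univ : Set ℕ).Finite :=
        (Set.Finite.biUnion hinf (fun v _ => h v)).subset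
          (fun i _ => Set.mem_biUnion (Set.mem_range_self i) rfl)
      exact Set.infinite_univ this
    have hv0 : 0 < v := by
      obtain ⟨i, hi⟩ := hv.nonempty
      have h1 : b.get i = v := hi
      exact h1 ▸ hbpos i
    refine ⟨Set.range fun k : ℕ => v * (k + 1), Set.infinite_range_of_injective ?_, ?_⟩
    · intro x y h
      have := Nat.eq_of_mul_eq_mul_left hv0 h
      omega
    · intro X hX hXS
      have hd : v ∣ ∑ x ∈ X, x := Finset.dvd_sum fun x hx => by
        obtain ⟨k, hk⟩ := hXS hx
        exact ⟨_, hk.symm⟩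
      have hp : 0 < ∑ x ∈ X, x := Finset.sum_pos (fun x hx => by
        obtain ⟨k, rfl⟩ := hXS hx
        positivity) hX
      obtain ⟨K, hK⟩ := hd
      have hK0 : 0 < K := Nat.pos_of_ne_zero (by rintro rfl; omega)
      obtain ⟨s, hs, hcard⟩ := hv.exists_subset_card_eq K
      have := hsum s (Finset.card_pos.1 (by omega))
      rw [Finset.sum_congr rfl (fun x hx => (show b.get x = v from hs hx)), Finset.sum_const, hcard,
        smul_eq_mul, mul_comm, ← hK] at this
      exact this
end

section
/- (Ω as universal Hindman number) Let q be a free idempotent ultrafilter on ℕ. If f : ℕ → ℝ has finite range, then there exist c ∈ ℝ and an infinite set S ⊆ ℕ such that: (a) for every finite nonempty X ⊆ S, f(∑_{x ∈ X} x) = c, and (b) for every finite X ⊆ S (possibly empty), {n : ℕ | f((∑_{x ∈ X} x) + n) = c} ∈ q. (Condition (b) says *f(∑(X ∪ {Ω})) = c where Ω is the canonical infinite hyperreal of the ultrapower by q.) -/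
theorem stmt_17 (q : Ultrafilter ℕ)
    (hfree : ∀ S : Set ℕ, S.Finite → S ∉ q)
    (hidem : ∀ S : Set ℕ, S ∈ q ↔ {n : ℕ | {m : ℕ | m + n ∈ S} ∈ q} ∈ q)
    (f : ℕ → ℝ) (hf : (Set.range f).Finite) :
    ∃ (c : ℝ) (S : Set ℕ), S.Infinite ∧
      (∀ X : Finset ℕ, X.Nonempty → ↑X ⊆ S → f (∑ x ∈ X, x) = c) ∧
      (∀ X : Finset ℕ, ↑X ⊆ S → {n : ℕ | f ((∑ x ∈ X, x) + n) = c} ∈ q) := by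
  classical
  obtain ⟨c, hc⟩ : ∃ c, {n | f n = c} ∈ q := by
    have h : (⋃ c ∈ Set.range f, {n | f n = c}) ∈ q := by
      have e : (⋃ c ∈ Set.range f, {n | f n = c}) = Set.univ := by
        ext n; simp
      rw [e]; exact Filter.univ_mem
    rw [Ultrafilter.finite_biUnion_mem_iff hf] at h
    obtain ⟨c, -, h⟩ := h
    exact ⟨c, h⟩
  set A : Set ℕ := {n | f n = c} with hA
  let B : Set ℕ := {n | n ∈ A ∧ {m | m + n ∈ A} ∈ q}
  have hB : B ∈ q := Filter.inter_mem hc ((hidem A).1 hc)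
  have hBB : ∀ n ∈ B, {m | m + n ∈ B} ∈ q := by
    intro n hn
    have h2 := (hidem _).1 hn.2
    filter_upwards [hn.2, h2] with k hk hk2
    refine ⟨hk, ?_⟩
    have e : {m | m + (k + n) ∈ A} = {m | m + k ∈ {m | m + n ∈ A}} := by
      ext m; simp [add_assoc]
    rw [e]; exact hk2
  let P : Set (Set ℕ) := {S | ∀ X : Finset ℕ, X.Nonempty → ↑X ⊆ S → ∑ x ∈ X, x ∈ B}
  obtain ⟨S, hS⟩ : ∃ S, Maximal (· ∈ P) S := by
    apply zorn_subset
    intro C hC hch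
    refine ⟨⋃₀ C, ?_, fun s hs => Set.subset_sUnion_of_mem hs⟩
    intro X hX hXC
    have hne : C.Nonempty := by
      obtain ⟨x, hx⟩ := hX
      obtain ⟨s, hs, -⟩ := hXC hx
      exact ⟨s, hs⟩
    obtain ⟨s, hs, hXs⟩ := DirectedOn.exists_mem_subset_of_finset_subset_biUnion
      (f := id) hne (s := X) (by exact hch.directedOn)
      (by simpa [Set.sUnion_eq_biUnion] using hXC)
    exact hC hs X hX hXs
  refine ⟨c, S, ?_, fun X hX hXS => (hS.1 X hX hXS).1, ?_⟩
  · intro hfin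
    have h1 : (⋂ X ∈ hfin.toFinset.powerset.filter Finset.Nonempty,
        {m | m + ∑ x ∈ X, x ∈ B}) ∈ (q : Filter ℕ) := by
      rw [Filter.biInter_finset_mem]
      intro X hX
      simp only [Finset.mem_filter, Finset.mem_powerset] at hX
      refine hBB _ (hS.1 X hX.2 ?_)
      intro x hx
      simpa using hX.1 hx
    have h2 : Sᶜ ∈ q := Ultrafilter.compl_mem_iff_notMem.2 (hfree S hfin)
    obtain ⟨x, ⟨hx1, hx2⟩, hx3⟩ :=
      q.nonempty_of_mem (Filter.inter_mem (Filter.inter_mem h1 h2) hB)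
    have hP : insert x S ∈ P := by
      intro X hX hXS
      by_cases hxX : x ∈ X
      · have hsub : ((X.erase x : Finset ℕ) : Set ℕ) ⊆ S := by
          intro y hy
          have hy' := Finset.mem_erase.1 (Finset.mem_coe.1 hy)
          exact (hXS hy'.2).resolve_left hy'.1
        rw [← Finset.add_sum_erase X (fun x => x) hxX]
        rcases (X.erase x).eq_empty_or_nonempty with h | h
        · rw [h]; simpa using hx3
        · have := Set.mem_iInter₂.1 hx1 (X.erase x) (by
            simp only [Finset.mem_filter, Finset.mem_powerset]
            refine ⟨fun y hy => ?_, h⟩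
            simpa using hsub hy)
          exact this
      · refine hS.1 X hX fun y hy => (hXS hy).resolve_left ?_
        rintro rfl
        exact hxX hy
    exact hx2 (hS.2 hP (Set.subset_insert x S) (Set.mem_insert x S))
  · intro X hXS
    rcases X.eq_empty_or_nonempty with rfl | h
    · simpa using hc
    · have := (hS.1 X h hXS).2
      filter_upwards [this] with m hm
      rw [add_comm]; exact hm
end

section
/- Let γ > 0 be an irrational real number. For every f : ℝ → ℝ there exists a γ-periodic function f̂ : ℝ → ℝ (i.e., f̂(x + γ) = f̂(x) for all x ∈ ℝ) such that f̂(n) = f(n) for every n ∈ ℕ. -/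
open Classical in
theorem stmt_18 (γ : ℝ) (hγpos : 0 < γ) (hγirr : Irrational γ) (f : ℝ → ℝ) :
    ∃ fhat : ℝ → ℝ, (∀ x : ℝ, fhat (x + γ) = fhat x) ∧
      ∀ n : ℕ, fhat n = f n := by
  let P : ℝ → ℕ → Prop := fun x n => ∃ k : ℤ, x = n + k * γ
  let F : (ℕ → Prop) → ℝ := fun p => if h : ∃ n, p n then f (h.choose : ℕ) else 0
  refine ⟨fun x => F (P x), fun x => ?_, fun n => ?_⟩
  · have : P (x + γ) = P x := by
      funext n
      apply propext
      constructor
      · rintro ⟨k, hk⟩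
        exact ⟨k - 1, by push_cast; linarith⟩
      · rintro ⟨k, hk⟩
        exact ⟨k + 1, by push_cast; linarith⟩
    simp only [this]
  · have h : ∃ m, P n m := ⟨n, 0, by simp⟩
    have hF : F (P n) = f (h.choose : ℕ) := dif_pos h
    obtain ⟨k, hk⟩ := h.choose_spec
    have hc : h.choose = n := by
      generalize h.choose = m at hk
      by_cases hk0 : k = 0
      · subst hk0
        simp at hk
        exact hk.symm
      · exfalso
        have h1 := (hγirr.intCast_mul hk0).ne_int ((n : ℤ) - m)
        apply h1
        push_cast
        linarith
    show F (P n) = f n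
    rw [hF, hc]
end

section
/- Let q be a free idempotent ultrafilter on ℕ, let γ > 0 be irrational, and let f : ℝ → ℝ be differentiable at every point of the open interval (−γ/2, γ/2). Then for every n ∈ ℕ with n ≥ 1 and every real ε > 0, the set {m : ℕ | |(f(rm_γ(n + m)) − f(rm_γ(n)))/rm_γ(m) − deriv f (rm_γ(n))| < ε} belongs to q. (I.e., the derivative-by-[rm_γ] operator satisfies D_γ[f ∘ rm_γ] = [f′ ∘ rm_γ]: the standard part of Δ(f ∘ rm_γ)(n)/[rm_γ] equals f′(rm_γ(n)).) -/
open Filter Topology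

theorem rm_tendsto (q : Ultrafilter ℕ)
    (hidem : ∀ S : Set ℕ, S ∈ q ↔ {n : ℕ | {m : ℕ | m + n ∈ S} ∈ q} ∈ q)
    (γ : ℝ) (hγpos : 0 < γ) : Tendsto (rm γ) q (𝓝 0) := by
  haveI : Fact (0 < γ) := ⟨hγpos⟩
  let g : ℕ → AddCircle γ := fun m => (((m : ℝ)) : AddCircle γ)
  have hadd : ∀ m n, g (m + n) = g m + g n := by
    intro m n
    simp only [g, Nat.cast_add]
    rfl
  obtain ⟨L, -, hL⟩ := isCompact_univ.ultrafilter_le_nhds (q.map g) (by simp)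
  have hL : Tendsto g q (𝓝 L) := hL
  have key : L + L = L := by
    by_contra hne
    have h1 : ({L + L}ᶜ : Set (AddCircle γ)) ∈ 𝓝 L :=
      isOpen_compl_singleton.mem_nhds (fun h => hne (by simpa using h.symm))
    obtain ⟨U, ⟨hU, hUc⟩, hUs⟩ := (closed_nhds_basis L).mem_iff.1 h1
    have h2 : g ⁻¹' U ∈ q := hL hU
    have h3 := (hidem _).1 h2
    have h4 : ∀ᶠ n in (q : Filter ℕ), L + g n ∈ U := by
      filter_upwards [h3] with n hn
      refine hUc.mem_of_tendsto (hL.add_const (g n)) ?_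
      filter_upwards [hn] with m hm
      have : g (m + n) ∈ U := hm
      rwa [hadd] at this
    have h5 := hUc.mem_of_tendsto (hL.const_add L) h4
    exact hUs h5 rfl
  have hL0 : L = 0 := by simpa using key
  rw [hL0] at hL
  have := hL.norm
  rw [norm_zero] at this
  rw [tendsto_zero_iff_abs_tendsto_zero]
  refine this.congr (fun m => ?_)
  simp only [g, Function.comp, rm]
  rw [AddCircle.norm_eq, div_eq_inv_mul, mul_comm γ]

theorem rm_irr {γ : ℝ} (hγirr : Irrational γ) (z w : ℤ) (h : γ * z = w) : z = 0 := by
  by_contra hz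
  apply hγirr
  refine ⟨(w : ℚ) / z, ?_⟩
  have : (z : ℝ) ≠ 0 := by exact_mod_cast hz
  push_cast
  rw [← h]
  field_simp

theorem rm_abs_lt {γ : ℝ} (hγpos : 0 < γ) (hγirr : Irrational γ) (n : ℕ) (hn : 1 ≤ n) :
    |rm γ n| < γ / 2 := by
  have h := abs_sub_round ((n : ℝ) / γ)
  have e : rm γ n = γ * ((n : ℝ) / γ - round ((n : ℝ) / γ)) := by
    unfold rm; field_simp
  have hle : |rm γ n| ≤ γ / 2 := by
    rw [e, abs_mul, abs_of_pos hγpos]; nlinarith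
  refine lt_of_le_of_ne hle (fun heq => ?_)
  rcases (abs_eq (by positivity)).1 heq with h1 | h1
  · have := rm_irr hγirr (2 * round ((n : ℝ) / γ) + 1) (2 * n) (by
      unfold rm at h1; push_cast; linarith)
    omega
  · have := rm_irr hγirr (2 * round ((n : ℝ) / γ) - 1) (2 * n) (by
      unfold rm at h1; push_cast; linarith)
    omega

theorem rm_ne_zero {γ : ℝ} (hγirr : Irrational γ) (n : ℕ) (hn : 1 ≤ n) :
    rm γ n ≠ 0 := by
  intro h
  unfold rm at h
  have := rm_irr hγirr (round ((n : ℝ) / γ)) n (by push_cast; linarith)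
  rw [this] at h
  simp at h
  omega

theorem rm_add {γ : ℝ} (hγpos : 0 < γ) (n m : ℕ) (h : |rm γ n + rm γ m| < γ / 2) :
    rm γ (n + m) = rm γ n + rm γ m := by
  have hr : round (((n + m : ℕ) : ℝ) / γ) = round ((n : ℝ) / γ) + round ((m : ℝ) / γ) := by
    rw [round_eq, Int.floor_eq_iff]
    rw [abs_lt] at h
    unfold rm at h
    have e : ((n + m : ℕ) : ℝ) = γ * (((n + m : ℕ) : ℝ) / γ) := by field_simp
    set x := ((n + m : ℕ) : ℝ) / γ
    push_cast at e ⊢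
    constructor
    · by_contra hc
      push Not at hc
      nlinarith
    · by_contra hc
      push Not at hc
      nlinarith
  unfold rm
  rw [hr]
  push_cast
  ring

theorem stmt_19 (q : Ultrafilter ℕ)
    (hfree : ∀ S : Set ℕ, S.Finite → S ∉ q)
    (hidem : ∀ S : Set ℕ, S ∈ q ↔ {n : ℕ | {m : ℕ | m + n ∈ S} ∈ q} ∈ q)
    (γ : ℝ) (hγpos : 0 < γ) (hγirr : Irrational γ)
    (f : ℝ → ℝ)
    (hdiff : ∀ x ∈ Set.Ioo (-(γ / 2)) (γ / 2), DifferentiableAt ℝ f x) :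
    ∀ n : ℕ, 1 ≤ n → ∀ ε : ℝ, 0 < ε →
      {m : ℕ | |(f (rm γ (n + m)) - f (rm γ n)) / rm γ m - deriv f (rm γ n)| < ε}
        ∈ q := by
  intro n hn ε hε
  have ht := rm_tendsto q hidem γ hγpos
  have hlt := rm_abs_lt hγpos hγirr n hn
  have hd := (hdiff _ (abs_lt.1 hlt)).hasDerivAt
  rw [hasDerivAt_iff_tendsto_slope_zero] at hd
  have hpos : ∀ᶠ m in (q : Filter ℕ), 1 ≤ m := by
    have := Ultrafilter.compl_mem_iff_notMem.2 (hfree {0} (Set.finite_singleton 0))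
    filter_upwards [this] with m hm
    exact Nat.one_le_iff_ne_zero.2 hm
  have ht' : Tendsto (rm γ) q (𝓝[≠] 0) :=
    tendsto_nhdsWithin_iff.2 ⟨ht, hpos.mono fun m hm => rm_ne_zero hγirr m hm⟩
  have h1 := Metric.tendsto_nhds.1 (hd.comp ht') ε hε
  have h2 : ∀ᶠ m in (q : Filter ℕ), |rm γ n + rm γ m| < γ / 2 := by
    have := (ht.const_add (rm γ n)).abs
    rw [add_zero] at this
    exact this.eventually_lt_const hlt
  show ∀ᶠ m in (q : Filter ℕ), _
  filter_upwards [h1, h2] with m hm1 hm2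
  rw [rm_add hγpos n m hm2]
  rw [Real.dist_eq] at hm1
  simpa [div_eq_inv_mul] using hm1
end
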